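/- Let D be a triangulated category and let a_m →^{d_m} a_{m-1} → ... → a_1 →^{d_1} a_0 be a bounded complex of objects of D (i.e. d_i ∘ d_{i+1} = 0 for 1 ≤ i < m) satisfying Hom_D(a_p[r], a_q) = 0 for all p > q and all r > 0. Then there exists a left convolution d : a → a_m of this complex, and the pair (a, d) is uniquely determined up to isomorphism. -/

import Mathlib

/-!
Statement 2.

Let `D` be a triangulated category and `a_m →^{d_m} a_{m-1} → ... → a_1 →^{d_1} a_0` a
bounded complex of objects (`d_i ∘ d_{i+1} = 0` for `1 ≤ i < m`) satisfying
`Hom_D(a_p[r], a_q) = 0` for all `p > q`, `r > 0`.  Then there exists a left convolution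
`d : a → a_m` of this complex, and the pair `(a, d)` is uniquely determined up to
isomorphism.

The complex is encoded with its natural *bottom-up* indexing: `a p` is the object `a_p`
and `d p : a (p+1) ⟶ a p` is the differential `d_{p+1}`.  The inductive predicate
`IsLeftConvolution m a d c e` expresses that `e : c ⟶ a m` is a left convolution,
following exactly the inductive construction of the paper: for `m = 0`, `a = a_0` and
`d = Id`; for `m ≥ 1` one chooses a distinguished triangle
`a'_1 →^{j_1} a_1 →^{d_1} a_0 → a'_1[1]`, a morphism `d'_2 : a_2 → a'_1` with
`j_1 ∘ d'_2 = d_2`, and takes a left convolution of the shorter complex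
`a_m → ... → a_2 →^{d'_2} a'_1`.
-/

open CategoryTheory CategoryTheory.Limits CategoryTheory.Pretriangulated

universe v u

variable {D : Type u} [Category.{v} D] [HasZeroObject D] [HasShift D ℤ]
  [Preadditive D] [∀ n : ℤ, (CategoryTheory.shiftFunctor D n).Additive] [Pretriangulated D]

/-- The objects of the complex obtained by replacing the two bottom terms `a_1 → a_0` of
the complex `a` by the object `x` (= `a'_1`). -/
def truncObj (a : ℕ → D) (x : D) : ℕ → D
  | 0 => x
  | k + 1 => a (k + 2)

/-- The differentials of the shortened complex: the new bottom differential is the induced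
morphism `d₂ : a 2 ⟶ x`, and the remaining differentials are unchanged. -/
def truncMap (a : ℕ → D) (d : ∀ i, a (i + 1) ⟶ a i) (x : D) (d₂ : a 2 ⟶ x) :
    ∀ i, truncObj a x (i + 1) ⟶ truncObj a x i
  | 0 => d₂
  | k + 1 => d (k + 2)

/-- `IsLeftConvolution m a d c e` : the morphism `e : c ⟶ a m` (to the top object `a_m` of
the complex) is a left convolution of the length-`m` complex with objects
`a 0, ..., a m` and differentials `d p : a (p+1) ⟶ a p`. -/
inductive IsLeftConvolution :
    ∀ (m : ℕ) (a : ℕ → D) (_ : ∀ i, a (i + 1) ⟶ a i) (c : D), (c ⟶ a m) → Prop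
  | zero (a : ℕ → D) (d : ∀ i, a (i + 1) ⟶ a i) :
      IsLeftConvolution 0 a d (a 0) (𝟙 (a 0))
  | one (a : ℕ → D) (d : ∀ i, a (i + 1) ⟶ a i) (x : D) (j : x ⟶ a 1)
      (δ : a 0 ⟶ x⟦(1 : ℤ)⟧)
      (_ : Triangle.mk j (d 0) δ ∈ distTriang D) :
      IsLeftConvolution 1 a d x j
  | step (m : ℕ) (a : ℕ → D) (d : ∀ i, a (i + 1) ⟶ a i) (x : D) (j : x ⟶ a 1)
      (δ : a 0 ⟶ x⟦(1 : ℤ)⟧)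
      (_ : Triangle.mk j (d 0) δ ∈ distTriang D)
      (d₂ : a 2 ⟶ x) (_ : d₂ ≫ j = d 1)
      (c : D) (e : c ⟶ a (m + 2))
      (_ : IsLeftConvolution (m + 1) (truncObj a x) (truncMap a d x d₂) c e) :
      IsLeftConvolution (m + 2) a d c e

/-!
Let `x → a₁ → a₀` be the triangle chosen at a stage of the construction. Two maps `Y ⟶ x` that agree
after composing with `x ⟶ a₁` are equal as soon as `Hom(Y⟦1⟧, a₀) = 0`. For `Y = a₃` this makes the
shortened sequence a complex, so that the construction can go on; for `Y = a₂` it makes the lift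
`a₂ ⟶ x` unique, hence compatible with every map of complexes. The long exact sequence of
`Hom(a_p⟦r⟧, -)` replaces `Hom(a_p⟦r⟧, x) = 0` by the vanishing of `Hom(a_p⟦r⟧, a₁)` and of
`Hom(a_p⟦r + 1⟧, a₀)`. As `p - q - r` is the same for these two and, after renumbering, for
`Hom(a_p⟦r⟧, x)`, vanishing propagates along each line `p - q = r + t`: the line `t = 2` contains
the obstructions to existence, and the line `t = 1` those to uniqueness.
-/

theorem eq_of_comp_mor₁_eq {T : Triangle D} (hT : T ∈ distTriang D) {Y : D}
    (hY : ∀ k : Y⟦(1 : ℤ)⟧ ⟶ T.obj₃, k = 0) {f g : Y ⟶ T.obj₁}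
    (h : f ≫ T.mor₁ = g ≫ T.mor₁) : f = g := by
  have hzero : (f - g)⟦(1 : ℤ)⟧' ≫ T.mor₁⟦(1 : ℤ)⟧' = 0 := by
    rw [← Functor.map_comp, Preadditive.sub_comp, h, sub_self, Functor.map_zero]
  obtain ⟨k, hk⟩ := T.coyoneda_exact₁ hT _ hzero
  rw [← sub_eq_zero]
  apply (shiftFunctor D (1 : ℤ)).map_injective
  rw [hk, hY k, zero_comp, Functor.map_zero]

theorem exists_hom₁_of_distTriang {T T' : Triangle D} (hT : T ∈ distTriang D)
    (hT' : T' ∈ distTriang D) (f₂ : T.obj₂ ⟶ T'.obj₂) (f₃ : T.obj₃ ⟶ T'.obj₃)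
    (comm : T.mor₂ ≫ f₃ = f₂ ≫ T'.mor₂) :
    ∃ f₁ : T.obj₁ ⟶ T'.obj₁, f₁ ≫ T'.mor₁ = T.mor₁ ≫ f₂ ∧
      (IsIso f₂ → IsIso f₃ → IsIso f₁) := by
  obtain ⟨f₁, comm₁, comm₃⟩ := complete_distinguished_triangle_morphism₁ T T' hT hT' f₂ f₃ comm
  exact ⟨f₁, comm₁.symm, isIso₁_of_isIso₂₃ ⟨f₁, f₂, f₃, comm₁, comm, comm₃⟩ hT hT'⟩

/-- The vanishing of `Hom(a_p⟦r⟧, b_q)` for `r > 0` and `p ≤ m` along the line `p - q = r + t`.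
The line `t = 2` serves the existence of left convolutions, and `t = 1` their functoriality. -/
def HomShiftVanishing (a b : ℕ → D) (m t : ℕ) : Prop :=
  ∀ (p q : ℕ) (r : ℤ), 0 < r → (p : ℤ) = q + r + t → p ≤ m → ∀ f : (a p)⟦r⟧ ⟶ b q, f = 0

theorem HomShiftVanishing.trunc {a b : ℕ → D} {m t : ℕ} (h : HomShiftVanishing a b (m + 1) t)
    (x : D) {y : D} {j : y ⟶ b 1} {g : b 1 ⟶ b 0} {δ : b 0 ⟶ y⟦(1 : ℤ)⟧}
    (hT : Triangle.mk j g δ ∈ distTriang D) :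
    HomShiftVanishing (truncObj a x) (truncObj b y) m t := by
  rintro (_ | p) (_ | q) r hr hpqr hpm f
  · omega
  · omega
  · have hshift (k : (a (p + 2))⟦r⟧⟦(1 : ℤ)⟧ ⟶ b 0) : k = 0 := by
      rw [← cancel_epi ((shiftFunctorAdd D r 1).hom.app (a (p + 2))), comp_zero]
      exact h (p + 2) 0 (r + 1) (by omega) (by omega) (by omega) _
    have hcomp : f ≫ j = 0 := h (p + 2) 1 r hr (by omega) (by omega) _
    exact eq_of_comp_mor₁_eq hT hshift (hcomp.trans zero_comp.symm)
  · exact h (p + 2) (q + 2) r hr (by omega) (by omega) f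

theorem truncMap_comp_truncMap {m : ℕ} {a : ℕ → D} {d : ∀ i, a (i + 1) ⟶ a i}
    (hd : ∀ i, i + 2 ≤ m + 1 → d (i + 1) ≫ d i = 0) (hv : HomShiftVanishing a a (m + 1) 2)
    {x : D} {j : x ⟶ a 1} {δ : a 0 ⟶ x⟦(1 : ℤ)⟧} (hT : Triangle.mk j (d 0) δ ∈ distTriang D)
    {d₂ : a 2 ⟶ x} (hd₂ : d₂ ≫ j = d 1) (i : ℕ) (hi : i + 2 ≤ m) :
    truncMap a d x d₂ (i + 1) ≫ truncMap a d x d₂ i = 0 := by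
  obtain _ | i := i
  · have hcomp : (d 2 ≫ d₂) ≫ j = 0 := by
      rw [Category.assoc, hd₂, hd 1 (by omega)]
    exact eq_of_comp_mor₁_eq hT (hv 3 0 1 one_pos (by norm_num) (by omega))
      (hcomp.trans zero_comp.symm)
  · exact hd (i + 2) (by omega)

theorem exists_isLeftConvolution {m : ℕ} {a : ℕ → D} {d : ∀ i, a (i + 1) ⟶ a i}
    (hd : ∀ i, i + 2 ≤ m → d (i + 1) ≫ d i = 0) (hv : HomShiftVanishing a a m 2) :
    ∃ (c : D) (e : c ⟶ a m), IsLeftConvolution m a d c e := by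
  induction m generalizing a d with
  | zero => exact ⟨_, _, .zero a d⟩
  | succ m ih =>
    obtain ⟨x, j, δ, hT⟩ := distinguished_cocone_triangle₁ (d 0)
    obtain _ | m := m
    · exact ⟨x, j, .one a d x j δ hT⟩
    · obtain ⟨d₂, hd₂⟩ : ∃ d₂ : a 2 ⟶ x, d 1 = d₂ ≫ j :=
        Triangle.coyoneda_exact₂ _ hT (d 1) (hd 0 (by omega))
      obtain ⟨c, e, hc⟩ := ih (truncMap_comp_truncMap hd hv hT hd₂.symm) (hv.trunc x hT)
      exact ⟨c, e, .step m a d x j δ hT d₂ hd₂.symm c e hc⟩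

/-- The morphism induced between two shortened complexes by a morphism `f` between the original
complexes and a morphism `g` between the new bottom objects. -/
def truncHom {a b : ℕ → D} (f : ∀ i, a i ⟶ b i) {x y : D} (g : x ⟶ y) :
    ∀ i, truncObj a x i ⟶ truncObj b y i
  | 0 => g
  | k + 1 => f (k + 2)

theorem truncMap_comp_truncHom {m : ℕ} {a b : ℕ → D} {d : ∀ i, a (i + 1) ⟶ a i}
    {d' : ∀ i, b (i + 1) ⟶ b i} {f : ∀ i, a i ⟶ b i}
    (comm : ∀ i < m + 1, d i ≫ f i = f (i + 1) ≫ d' i) (hv : HomShiftVanishing a b (m + 1) 1)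
    {x x' : D} {j : x ⟶ a 1} {j' : x' ⟶ b 1} {δ' : b 0 ⟶ x'⟦(1 : ℤ)⟧}
    (hT' : Triangle.mk j' (d' 0) δ' ∈ distTriang D) {d₂ : a 2 ⟶ x} (hd₂ : d₂ ≫ j = d 1)
    {d₂' : b 2 ⟶ x'} (hd₂' : d₂' ≫ j' = d' 1) {g : x ⟶ x'} (hg : g ≫ j' = j ≫ f 1)
    (i : ℕ) (hi : i < m) :
    truncMap a d x d₂ i ≫ truncHom f g i = truncHom f g (i + 1) ≫ truncMap b d' x' d₂' i := by
  obtain _ | i := i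
  · have hcomp : (d₂ ≫ g) ≫ j' = (f 2 ≫ d₂') ≫ j' :=
      calc (d₂ ≫ g) ≫ j' = d 1 ≫ f 1 := by rw [Category.assoc, hg, reassoc_of% hd₂]
        _ = f 2 ≫ d' 1 := comm 1 (by omega)
        _ = (f 2 ≫ d₂') ≫ j' := by rw [Category.assoc, hd₂']
    exact eq_of_comp_mor₁_eq hT' (hv 2 0 1 one_pos (by norm_num) (by omega)) hcomp
  · exact comm (i + 2) (by omega)

theorem IsLeftConvolution.exists_hom {m : ℕ} {a b : ℕ → D} {d : ∀ i, a (i + 1) ⟶ a i}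
    {d' : ∀ i, b (i + 1) ⟶ b i} {f : ∀ i, a i ⟶ b i}
    (comm : ∀ i < m, d i ≫ f i = f (i + 1) ≫ d' i) (hv : HomShiftVanishing a b m 1)
    {c c' : D} {e : c ⟶ a m} {e' : c' ⟶ b m}
    (hc : IsLeftConvolution m a d c e) (hc' : IsLeftConvolution m b d' c' e') :
    ∃ φ : c ⟶ c', φ ≫ e' = e ≫ f m ∧ ((∀ i ≤ m, IsIso (f i)) → IsIso φ) := by
  induction hc generalizing b c' with
  | zero a d =>
    cases hc'
    exact ⟨f 0, by rw [Category.comp_id, Category.id_comp], fun hf => hf 0 le_rfl⟩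
  | one a d x j δ hT =>
    cases hc' with
    | one _ _ _ _ δ' hT' =>
    obtain ⟨φ, hφ, hiso⟩ :=
      exists_hom₁_of_distTriang hT hT' (f 1) (f 0) (comm 0 one_pos)
    exact ⟨φ, hφ, fun hf => hiso (hf 1 le_rfl) (hf 0 zero_le_one)⟩
  | step m a d x j δ hT d₂ hd₂ c e _ ih =>
    cases hc' with
    | step _ _ _ x' j' δ' hT' d₂' hd₂' _ _ hc' =>
    obtain ⟨g, hg, hg_iso⟩ : ∃ g : x ⟶ x', g ≫ j' = j ≫ f 1 ∧
        (IsIso (f 1) → IsIso (f 0) → IsIso g) :=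
      exists_hom₁_of_distTriang hT hT' (f 1) (f 0) (comm 0 (by omega))
    have hcomm : ∀ i < m + 1, truncMap a d x d₂ i ≫ truncHom f g i =
        truncHom f g (i + 1) ≫ truncMap b d' x' d₂' i :=
      truncMap_comp_truncHom comm hv hT' hd₂ hd₂' hg
    obtain ⟨φ, hφ, hφ_iso⟩ := ih hcomm (hv.trunc x hT') hc'
    refine ⟨φ, hφ, fun hf => hφ_iso ?_⟩
    rintro (_ | i) hi
    · exact hg_iso (hf 1 (by omega)) (hf 0 (by omega))
    · exact hf (i + 2) (by omega)

theorem IsLeftConvolution.exists_iso {m : ℕ} {a : ℕ → D} {d : ∀ i, a (i + 1) ⟶ a i}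
    (hv : HomShiftVanishing a a m 1) {c₁ c₂ : D} {e₁ : c₁ ⟶ a m} {e₂ : c₂ ⟶ a m}
    (h₁ : IsLeftConvolution m a d c₁ e₁) (h₂ : IsLeftConvolution m a d c₂ e₂) :
    ∃ φ : c₁ ≅ c₂, φ.hom ≫ e₂ = e₁ := by
  have comm : ∀ i < m, d i ≫ 𝟙 (a i) = 𝟙 (a (i + 1)) ≫ d i := fun i _ => by
    rw [Category.comp_id, Category.id_comp]
  obtain ⟨φ, hφ, hiso⟩ := h₁.exists_hom comm hv h₂
  have : IsIso φ := hiso fun _ _ => inferInstance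
  exact ⟨asIso φ, hφ.trans (Category.comp_id e₁)⟩

theorem left_convolution_exists_and_unique_up_to_iso_general
    (m : ℕ) (a : ℕ → D) (d : ∀ i, a (i + 1) ⟶ a i)
    (hcomplex : ∀ i, i + 2 ≤ m → d (i + 1) ≫ d i = 0)
    (hexists : HomShiftVanishing a a m 2) (hunique : HomShiftVanishing a a m 1) :
    (∃ (c : D) (e : c ⟶ a m), IsLeftConvolution m a d c e) ∧
    (∀ (c₁ c₂ : D) (e₁ : c₁ ⟶ a m) (e₂ : c₂ ⟶ a m),
      IsLeftConvolution m a d c₁ e₁ → IsLeftConvolution m a d c₂ e₂ →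
      ∃ φ : c₁ ≅ c₂, φ.hom ≫ e₂ = e₁) :=
  ⟨exists_isLeftConvolution hcomplex hexists, fun _ _ _ _ h₁ h₂ => h₁.exists_iso hunique h₂⟩

/-- A bounded complex `a_m → ... → a_0` in a triangulated category with
`Hom(a_p[r], a_q) = 0` for `p > q`, `r > 0` admits a left convolution `d : a → a_m`,
unique up to isomorphism (compatibly with `d`). -/
theorem left_convolution_exists_and_unique_up_to_iso
    (m : ℕ) (a : ℕ → D) (d : ∀ i, a (i + 1) ⟶ a i)
    (hcomplex : ∀ i, i + 2 ≤ m → d (i + 1) ≫ d i = 0)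
    (hvanish : ∀ p q, q < p → p ≤ m → ∀ r : ℤ, 0 < r →
      ∀ f : (a p)⟦r⟧ ⟶ a q, f = 0) :
    (∃ (c : D) (e : c ⟶ a m), IsLeftConvolution m a d c e) ∧
    (∀ (c₁ c₂ : D) (e₁ : c₁ ⟶ a m) (e₂ : c₂ ⟶ a m),
      IsLeftConvolution m a d c₁ e₁ → IsLeftConvolution m a d c₂ e₂ →
      ∃ φ : c₁ ≅ c₂, φ.hom ≫ e₂ = e₁) :=
  left_convolution_exists_and_unique_up_to_iso_general m a d hcomplex
    (fun p q r hr hpqr hpm => hvanish p q (by omega) hpm r hr)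
    (fun p q r hr hpqr hpm => hvanish p q (by omega) hpm r hr)
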